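/- arXiv:1111.4727 — 3 statements merged into one kernel-verified Lean document; each statement's English description precedes it below -/
import Mathlib

section
/- Let U ⊆ ℝᵏ be a nonempty open connected set and let g : ℝᵏ → ℝ be real analytic on U. If g is not identically zero on U, then the zero set {x ∈ U : g(x) = 0} has Lebesgue measure zero. -/
/-!
The zero set is null because it is locally null. By the identity theorem `g` does not vanish
identically on any ball inside `U`, so it suffices to treat balls for the sup norm
(`volume_zeroSet_ball`). These are cubes, and the claim for cubes follows by induction on the
dimension and Fubini: write a cube of dimension `k + 1` as `I × Q` and let `g (a, b) ≠ 0`. The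
one-variable function `t ↦ g (t, b)` is analytic and not identically zero on the interval `I`, so
its zeros are discrete, hence `g (t, b) ≠ 0` for almost every `t ∈ I`. For every such `t` the slice
`g (t, ·)` is analytic and not identically zero on `Q`, so its zero set is null by the induction
hypothesis. Thus almost every slice of the zero set is null.
-/

open MeasureTheory

/-- Sup-norm balls in dimension `k + 1` are products of an interval and a ball in dimension `k`. -/
lemma cons_mem_ball_iff {k : ℕ} (c : Fin (k + 1) → ℝ) {r : ℝ} (hr : 0 < r) (t : ℝ)
    (y : Fin k → ℝ) :
    (Fin.cons t y : Fin (k + 1) → ℝ) ∈ Metric.ball c r ↔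
      t ∈ Metric.ball (c 0) r ∧ y ∈ Metric.ball (Fin.tail c) r := by
  simp only [Metric.mem_ball, dist_pi_lt_iff hr, Fin.forall_fin_succ, Fin.cons_zero,
    Fin.cons_succ, Fin.tail]

lemma analyticAt_cons_left {k : ℕ} (y : Fin k → ℝ) (t : ℝ) :
    AnalyticAt ℝ (fun s : ℝ => (Fin.cons s y : Fin (k + 1) → ℝ)) t := by
  refine analyticAt_pi_iff.2 fun i => ?_
  cases i using Fin.cases with
  | zero => exact analyticAt_id
  | succ i => simpa using analyticAt_const

lemma analyticAt_cons_right {k : ℕ} (t : ℝ) (y : Fin k → ℝ) :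
    AnalyticAt ℝ (fun z : Fin k → ℝ => (Fin.cons t z : Fin (k + 1) → ℝ)) y := by
  refine analyticAt_pi_iff.2 fun i => ?_
  cases i using Fin.cases with
  | zero => simpa using analyticAt_const
  | succ i =>
    exact (ContinuousLinearMap.proj (R := ℝ) (φ := fun _ : Fin k => ℝ) i).analyticAt y

/-- The case of a sup-norm ball, by induction on the dimension and Fubini. -/
lemma volume_zeroSet_ball {k : ℕ} (c : Fin k → ℝ) {r : ℝ} (hr : 0 < r) (g : (Fin k → ℝ) → ℝ)
    (hg : AnalyticOnNhd ℝ g (Metric.ball c r)) (hnz : ∃ x ∈ Metric.ball c r, g x ≠ 0) :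
    volume {x ∈ Metric.ball c r | g x = 0} = 0 := by
  induction k with
  | zero =>
    -- `Fin 0 → ℝ` is a single point, at which `g` does not vanish.
    obtain ⟨x, -, hx⟩ := hnz
    have : {x ∈ Metric.ball c r | g x = 0} = ∅ := by
      ext y
      simp [Subsingleton.elim y x, hx]
    rw [this, measure_empty]
  | succ k ih =>
    obtain ⟨x, hxB, hx⟩ := hnz
    rw [← Fin.cons_self_tail x] at hxB hx
    obtain ⟨ha, hb⟩ := (cons_mem_ball_iff c hr _ _).1 hxB
    have hmeas : MeasurableSet {x ∈ Metric.ball c r | g x = 0} := by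
      have h := hg.continuousOn.isOpen_inter_preimage Metric.isOpen_ball
        (isOpen_compl_singleton (x := (0 : ℝ)))
      convert Metric.isOpen_ball.measurableSet.diff h.measurableSet using 1
      ext z
      simp
      tauto
    have hmp := (volume_preserving_piFinSuccAbove (fun _ : Fin (k + 1) => ℝ) 0).symm
    rw [← hmp.measure_preimage hmeas.nullMeasurableSet, Measure.volume_eq_prod,
      Measure.measure_prod_null (hmp.measurable hmeas)]
    have hslice : AnalyticOnNhd ℝ (fun t => g (Fin.cons t (Fin.tail x)))
        (Metric.ball (c 0) r) := fun t ht =>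
      (hg _ ((cons_mem_ball_iff c hr _ _).2 ⟨ht, hb⟩)).comp_of_eq
        (analyticAt_cons_left (Fin.tail x) t) rfl
    have hae : ∀ᵐ t ∂(volume.restrict (Metric.ball (c 0) r)), g (Fin.cons t (Fin.tail x)) ≠ 0 :=
      ae_restrict_le_codiscreteWithin measurableSet_ball
        (hslice.preimage_zero_mem_codiscreteWithin hx ha
          ((convex_ball _ _).isConnected ⟨_, ha⟩))
    rw [ae_restrict_iff' measurableSet_ball] at hae
    filter_upwards [hae] with t ht
    have hset : Prod.mk t ⁻¹' ((MeasurableEquiv.piFinSuccAbove (fun _ : Fin (k + 1) => ℝ) 0).symm ⁻¹'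
        {x ∈ Metric.ball c r | g x = 0}) =
        {y | (t ∈ Metric.ball (c 0) r ∧ y ∈ Metric.ball (Fin.tail c) r) ∧
          g (Fin.cons t y) = 0} := by
      ext y
      simp only [← cons_mem_ball_iff c hr, Set.mem_preimage, Set.mem_ofPred_eq,
        MeasurableEquiv.piFinSuccAbove_symm_apply]
      have hcons : Fin.insertNthEquiv (fun _ : Fin (k + 1) => ℝ) 0 (t, y) = Fin.cons t y :=
        Fin.insertNth_zero' t y
      rw [hcons]
    simp only [Pi.zero_apply]
    refine (congrArg volume hset).trans ?_
    by_cases htB : t ∈ Metric.ball (c 0) r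
    · simp only [htB, true_and]
      exact ih (Fin.tail c) (fun y => g (Fin.cons t y))
        (fun y hy => (hg _ ((cons_mem_ball_iff c hr _ _).2 ⟨htB, hy⟩)).comp
          (analyticAt_cons_right t y)) ⟨_, hb, ht htB⟩
    · simp [htB]

theorem measure_zeroSet_of_analyticOnNhd {k : ℕ}
    (U : Set (Fin k → ℝ)) (hUopen : IsOpen U) (hUne : U.Nonempty)
    (hUconn : IsConnected U)
    (g : (Fin k → ℝ) → ℝ) (hg : AnalyticOnNhd ℝ g U)
    (hnz : ∃ x ∈ U, g x ≠ 0) :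
    volume {x ∈ U | g x = 0} = 0 := by
  refine measure_null_of_locally_null _ fun x hx => ?_
  obtain ⟨r, hr, hball⟩ := Metric.isOpen_iff.1 hUopen x hx.1
  refine ⟨{y ∈ Metric.ball x r | g y = 0}, ?_, ?_⟩
  · filter_upwards [self_mem_nhdsWithin, mem_nhdsWithin_of_mem_nhds (Metric.ball_mem_nhds x hr)]
      with y hy hyB using ⟨hyB, hy.2⟩
  · refine volume_zeroSet_ball x hr g (hg.mono hball) ?_
    by_contra! h
    obtain ⟨z, hzU, hz⟩ := hnz
    refine hz (hg.eqOn_zero_of_preconnected_of_eventuallyEq_zero hUconn.isPreconnected hx.1 ?_ hzU)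
    filter_upwards [Metric.ball_mem_nhds x hr] with y hy using h y hy
end

section
/- Let U ⊆ ℝᵖ be open and let φ : ℝᵖ → ℝⁿ be continuously differentiable on U such that for every x ∈ U the derivative Dφ(x) : ℝᵖ → ℝⁿ is surjective (φ is a submersion on U). Then the pushforward under φ of Lebesgue measure restricted to U is absolutely continuous with respect to Lebesgue measure on ℝⁿ. -/
/-!
Fix `x ∈ U`, put `A = Dφ(x)`, and let `R` be a linear right inverse of `A`. The map
`ψ y = y + R (φ y - A y)` satisfies `A ∘ ψ = φ` and has strict derivative `id` at `x`. Hence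
`ψ` is so close to the identity near `x` that it shrinks volumes by a factor of at most two there
(`exists_nhds_measure_le_two_mul_image`). If `N` is null, then so is `A ⁻¹' N`, because a surjective
linear map sends Lebesgue measure to a multiple of Lebesgue measure. As `ψ` sends `φ ⁻¹' N` into
`A ⁻¹' N`, the set `φ ⁻¹' N` is null near `x`. Thus `U ∩ φ ⁻¹' N` is locally null, hence null.
-/

open MeasureTheory

/-- A map with strict derivative `id` at a point is close to the identity in the sense of
`ApproximatesLinearOn` near that point, so it can shrink volumes there by at most a fixed factor. -/
lemma exists_nhds_measure_le_two_mul_image {p : ℕ} {ψ : (Fin p → ℝ) → (Fin p → ℝ)}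
    {x : Fin p → ℝ} (h : HasStrictFDerivAt ψ (ContinuousLinearMap.id ℝ (Fin p → ℝ)) x) :
    ∃ V ∈ nhds x, ∀ s ⊆ V, volume s ≤ 2 * volume (ψ '' s) := by
  have h1 := mul_le_addHaar_image_of_lt_det (volume : Measure (Fin p → ℝ))
    (ContinuousLinearMap.id ℝ (Fin p → ℝ)) (m := 2⁻¹) (by
      rw [ContinuousLinearMap.det, ContinuousLinearMap.coe_id, LinearMap.det_id]
      norm_num [ENNReal.inv_lt_one])
  obtain ⟨δ, hδ, hδ0⟩ := (h1.and self_mem_nhdsWithin).exists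
  obtain ⟨V, hV, hVx⟩ := h.approximates_deriv_on_nhds (c := δ) (Or.inr hδ0)
  refine ⟨V, hV, fun s hs => ?_⟩
  have h2 := hδ s ψ (hVx.mono_set hs)
  rw [ENNReal.coe_inv (by norm_num), ENNReal.inv_mul_le_iff (by norm_num) (by norm_num)] at h2
  simpa using h2

lemma volume_preimage_eq_zero_of_surjective {p n : ℕ} (A : (Fin p → ℝ) →ₗ[ℝ] (Fin n → ℝ))
    (hA : Function.Surjective A) {N : Set (Fin n → ℝ)} (hN : MeasurableSet N)
    (hN0 : volume N = 0) : volume (A ⁻¹' N) = 0 := by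
  obtain ⟨c, -, hc⟩ := A.exists_map_addHaar_eq_smul_addHaar volume volume hA
  rw [← Measure.map_apply A.continuous_of_finiteDimensional.measurable hN, hc]
  simp [hN0]

theorem pushforward_absolutelyContinuous_of_submersion {p n : ℕ}
    (U : Set (Fin p → ℝ)) (hU : IsOpen U)
    (φ : (Fin p → ℝ) → (Fin n → ℝ))
    (hφ : ContDiffOn ℝ 1 φ U)
    (hsurj : ∀ x ∈ U, Function.Surjective (fderiv ℝ φ x)) :
    Measure.map φ (volume.restrict U) ≪ volume := by
  refine Measure.AbsolutelyContinuous.mk fun N hN hN0 => ?_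
  rw [Measure.map_apply_of_aemeasurable (hφ.continuousOn.aemeasurable hU.measurableSet) hN,
    Measure.restrict_apply' hU.measurableSet]
  refine measure_null_of_locally_null _ fun x hx => ?_
  have hstrict : HasStrictFDerivAt φ (fderiv ℝ φ x) x :=
    (hφ.contDiffAt (hU.mem_nhds hx.2)).hasStrictFDerivAt one_ne_zero
  set A := fderiv ℝ φ x
  obtain ⟨R₀, hR₀⟩ := (A : (Fin p → ℝ) →ₗ[ℝ] (Fin n → ℝ)).exists_rightInverse_of_surjective
    (LinearMap.range_eq_top.2 (hsurj x hx.2))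
  let R : (Fin n → ℝ) →L[ℝ] (Fin p → ℝ) := LinearMap.toContinuousLinearMap R₀
  have hAR : ∀ z, A (R z) = z := fun z => LinearMap.congr_fun hR₀ z
  let ψ : (Fin p → ℝ) → (Fin p → ℝ) := fun y => y + R (φ y - A y)
  have hAψ : ∀ y, A (ψ y) = φ y := fun y => by simp [ψ, map_add, hAR]
  have hψ : HasStrictFDerivAt ψ (ContinuousLinearMap.id ℝ (Fin p → ℝ)) x := by
    have h := (hasStrictFDerivAt_id (𝕜 := ℝ) x).add
      (R.hasStrictFDerivAt.comp x (hstrict.sub A.hasStrictFDerivAt))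
    rw [sub_self, ContinuousLinearMap.comp_zero, add_zero] at h
    exact h
  obtain ⟨V, hV, hVle⟩ := exists_nhds_measure_le_two_mul_image hψ
  refine ⟨(φ ⁻¹' N ∩ U) ∩ V, Filter.inter_mem self_mem_nhdsWithin
    (mem_nhdsWithin_of_mem_nhds hV), ?_⟩
  have hsub : ψ '' ((φ ⁻¹' N ∩ U) ∩ V) ⊆ A ⁻¹' N := by
    rintro _ ⟨y, hy, rfl⟩
    simpa [hAψ] using hy.1.1
  have hnull := measure_mono_null hsub
    (volume_preimage_eq_zero_of_surjective (A : (Fin p → ℝ) →ₗ[ℝ] (Fin n → ℝ))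
      (hsurj x hx.2) hN hN0)
  have hle := hVle ((φ ⁻¹' N ∩ U) ∩ V) Set.inter_subset_right
  rwa [hnull, mul_zero, nonpos_iff_eq_zero] at hle
end

section
/- Let φ : ℝᵖ → ℝⁿ be infinitely differentiable (C^∞) and suppose that for every x ∈ ℝᵖ the derivative Dφ(x) : ℝᵖ → ℝⁿ is not surjective. Then the image φ(ℝᵖ) has Lebesgue measure zero in ℝⁿ. -/
/-!
The statement is a case of Sard's theorem: the critical values of a smooth map `f : U → ℝⁿ`, `U`
open in a finite-dimensional space `E`, form a null set. The proof is by induction on `dim E`, for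
all `n`, `U` and `f` at once (`sardBelow`). The critical set is cut into three parts.

* Points where `Df ≠ 0` (`volume_image_rank_pos_eq_zero`). Near such a point some component `fᵢ`
  can be used as the first coordinate of a chart `ℝ × K`, with `dim K < dim E`. In this chart `f`
  preserves the first coordinate, and a critical point of `f` is a critical point of the slice
  `K → ℝⁿ⁻¹` through it. The slices have null critical values by induction, and Fubini concludes.
* Points where `Df = 0` but some higher derivative does not vanish
  (`volume_image_not_flat_eq_zero`). Some scalar component `w` of a derivative of `f` vanishes
  there while `Dw ≠ 0`, so locally these points lie on the hypersurface `w = 0`; they are critical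
  for the restriction of `f` to it, and induction applies.
* Points where all derivatives of orders `1, …, dim E + 1` vanish (`volume_image_flat_eq_zero`). By
  Taylor's estimate `f` is locally Hölder of exponent greater than `dim E` on this set, so its image has
  Hausdorff dimension less than `1`, hence is null.

The coordinates used in the first two parts come from the inverse function theorem (`exists_chart`).
-/

open MeasureTheory
open Module Filter Topology
open scoped ContDiff NNReal ENNReal

/-! ### Vanishing derivatives and Taylor's estimate -/

section Flat

variable {E : Type} [NormedAddCommGroup E] [NormedSpace ℝ E]

/-- The derivatives of `g` at `x` of orders `1, …, k` vanish. The recursion replaces `g` by its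
derivative `fderiv ℝ g`, so the codomain `G` varies. -/
def FlatAt : ℕ → (G : Type) → [NormedAddCommGroup G] → [NormedSpace ℝ G] → (E → G) → E → Prop
  | 0, _, _, _, _, _ => True
  | k + 1, G, _, _, g, x => fderiv ℝ g x = 0 ∧ FlatAt k (E →L[ℝ] G) (fderiv ℝ g) x

/-- Taylor's estimate at flat points, uniform on a compact convex set: the bound for the derivative
is integrated along segments by the mean value inequality. -/
theorem exists_norm_sub_le_of_flatAt {U K : Set E} (hU : IsOpen U) (hK : IsCompact K)
    (hKc : Convex ℝ K) (hKU : K ⊆ U) (k : ℕ) :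
    ∀ (G : Type) [NormedAddCommGroup G] [NormedSpace ℝ G] (g : E → G), ContDiffOn ℝ ∞ g U →
      ∃ C : ℝ≥0, ∀ x ∈ K, FlatAt k G g x → ∀ y ∈ K, ‖g y - g x‖ ≤ C * ‖y - x‖ ^ (k + 1) := by
  induction k with
  | zero =>
    intro G _ _ g hg
    have hc : ContinuousOn (fderiv ℝ g) K :=
      (hg.continuousOn_fderiv_of_isOpen hU (by simp)).mono hKU
    obtain ⟨C, hC⟩ := hK.exists_bound_of_continuousOn hc
    refine ⟨C.toNNReal, fun x hx _ y hy => ?_⟩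
    simp only [zero_add, pow_one]
    refine hKc.norm_image_sub_le_of_norm_fderiv_le (𝕜 := ℝ) (fun z hz => ?_)
      (fun z hz => (hC z hz).trans (Real.le_coe_toNNReal C)) hx hy
    exact (hg.contDiffAt (hU.mem_nhds (hKU hz))).differentiableAt (by simp)
  | succ k ih =>
    intro G _ _ g hg
    obtain ⟨C, hC⟩ := ih (E →L[ℝ] G) (fderiv ℝ g)
      (hg.fderiv_of_isOpen hU (by simp))
    refine ⟨C, fun x hx hflat y hy => ?_⟩
    obtain ⟨h0, hflat⟩ := hflat
    have hseg : segment ℝ x y ⊆ K := hKc.segment_subset hx hy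
    have := (convex_segment (𝕜 := ℝ) x y).norm_image_sub_le_of_norm_fderiv_le (𝕜 := ℝ) (f := g)
      (C := C * ‖y - x‖ ^ (k + 1)) (fun z hz => ?_) (fun z hz => ?_)
      (left_mem_segment ℝ x y) (right_mem_segment ℝ x y)
    · calc _ ≤ _ := this
        _ = _ := by ring
    · exact (hg.contDiffAt (hU.mem_nhds (hKU (hseg hz)))).differentiableAt (by simp)
    · have h1 := hC x hx hflat z (hseg hz)
      rw [h0, sub_zero] at h1
      refine h1.trans ?_
      gcongr
      obtain ⟨t, ht, rfl⟩ := segment_eq_image' ℝ x y ▸ hz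
      simp only [add_sub_cancel_left, norm_smul, Real.norm_eq_abs, abs_of_nonneg ht.1]
      exact mul_le_of_le_one_left (norm_nonneg _) ht.2

end Flat

/-- Nullity of an image can be checked locally in the source, by the Lindelöf property. -/
theorem volume_image_eq_zero_of_locally {E : Type} [TopologicalSpace E]
    [SecondCountableTopology E] {n : ℕ} {f : E → Fin n → ℝ} {S : Set E}
    (h : ∀ x ∈ S, ∃ V ∈ 𝓝 x, volume (f '' (S ∩ V)) = 0) : volume (f '' S) = 0 := by
  refine (HereditarilyLindelofSpace.isLindelof S).induction_on
    (p := fun s => volume (f '' s) = 0) ?_ ?_ ?_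
  · exact fun s t hst ht => measure_mono_null (Set.image_mono hst) ht
  · intro T hT h
    rw [Set.sUnion_eq_biUnion, Set.image_iUnion₂]
    exact (measure_biUnion_null_iff hT).2 h
  · intro x hx
    obtain ⟨V, hV, h0⟩ := h x hx
    exact ⟨S ∩ V, inter_mem_nhdsWithin S hV, h0⟩

/-- On points flat of order `k ≥ dim E`, `f` is locally Hölder of exponent `k + 1`, so the image has
Hausdorff dimension at most `dim E / (k + 1) < 1 ≤ n`. -/
theorem volume_image_flat_eq_zero {E : Type} [NormedAddCommGroup E] [NormedSpace ℝ E]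
    [FiniteDimensional ℝ E] {n : ℕ} (hn : 0 < n) {f : E → Fin n → ℝ} {U : Set E}
    (hU : IsOpen U) (hf : ContDiffOn ℝ ∞ f U) {k : ℕ} (hk : finrank ℝ E ≤ k) :
    volume (f '' {x ∈ U | FlatAt k _ f x}) = 0 := by
  have hdim : dimH (f '' {x ∈ U | FlatAt k _ f x}) ≤
      dimH {x ∈ U | FlatAt k _ f x} / ((k + 1 : ℕ) : ℝ≥0) := by
    refine dimH_image_le_of_locally_holder_on (by positivity) fun x hx => ?_
    obtain ⟨r, hr, hball⟩ := Metric.nhds_basis_closedBall.mem_iff.1 (hU.mem_nhds hx.1)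
    obtain ⟨C, hC⟩ := exists_norm_sub_le_of_flatAt hU (isCompact_closedBall x r)
      (convex_closedBall x r) hball k _ f hf
    refine ⟨C, _, inter_mem_nhdsWithin _ (Metric.closedBall_mem_nhds x hr), ?_⟩
    -- The real estimate is rewritten in terms of `edist` and real powers, as `HolderOnWith` asks.
    rintro a ⟨ha, haK⟩ b ⟨-, hbK⟩
    have := hC a haK ha.2 b hbK
    rw [← norm_sub_rev, ← norm_sub_rev a] at this
    rw [edist_dist, edist_dist, dist_eq_norm, dist_eq_norm, NNReal.coe_natCast,
      ENNReal.rpow_natCast, ← ENNReal.ofReal_pow (norm_nonneg _),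
      ← ENNReal.ofReal_coe_nnreal, ← ENNReal.ofReal_mul (by positivity)]
    exact ENNReal.ofReal_le_ofReal this
  have hlt : dimH (f '' {x ∈ U | FlatAt k _ f x}) < ((n : ℝ≥0) : ℝ≥0∞) := by
    refine hdim.trans_lt ?_
    have h1 : dimH {x ∈ U | FlatAt k _ f x} ≤ finrank ℝ E :=
      (dimH_mono (Set.subset_univ _)).trans (Real.dimH_univ_eq_finrank E).le
    refine (ENNReal.div_le_div_right h1 _).trans_lt (lt_of_lt_of_le (b := 1) ?_ ?_)
    · rw [ENNReal.div_lt_iff (by simp) (by simp), one_mul]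
      exact_mod_cast Nat.lt_succ_of_le hk
    · exact_mod_cast hn
  have := hausdorffMeasure_of_dimH_lt hlt
  rw [← hausdorffMeasure_pi_real]
  simpa using this

/-! ### Openness of surjectivity, and straightening a function -/

/-- Surjectivity is an open condition: if `R` is a right inverse of `A`, then `B ∘ R` is invertible
for `B` near `A`. -/
theorem eventually_surjective {E F : Type} [NormedAddCommGroup E]
    [NormedSpace ℝ E] [NormedAddCommGroup F] [NormedSpace ℝ F] [FiniteDimensional ℝ F]
    {A : E →L[ℝ] F} (hA : Function.Surjective A) :
    ∀ᶠ B : E →L[ℝ] F in 𝓝 A, Function.Surjective B := by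
  obtain ⟨R, hR⟩ := (A : E →ₗ[ℝ] F).exists_rightInverse_of_surjective
    (LinearMap.range_eq_top.2 hA)
  have : CompleteSpace F := FiniteDimensional.complete ℝ F
  let R' : F →L[ℝ] E := LinearMap.toContinuousLinearMap R
  have hcont : Continuous fun B : E →L[ℝ] F => B.comp R' := by fun_prop
  have h1 : A.comp R' = 1 := by
    ext y
    exact LinearMap.congr_fun hR y
  have hu : {B : F →L[ℝ] F | IsUnit B} ∈ 𝓝 (A.comp R') :=
    Units.isOpen.mem_nhds (by rw [h1]; exact isUnit_one)
  filter_upwards [hcont.continuousAt.preimage_mem_nhds hu] with B hB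
  obtain ⟨u, hu⟩ := hB
  intro y
  refine ⟨R' ((↑u⁻¹ : F →L[ℝ] F) y), ?_⟩
  have := congrArg (fun T : F →L[ℝ] F => T y) (u.mul_inv)
  rw [hu] at this
  simpa using this

/-- A smooth function `w` with `Dw(x₀) ≠ 0` is the first coordinate of a smooth chart near `x₀`:
`x ↦ (w x, π x)` takes `V` into the open set `W`, `σ` is a left inverse of it on `V`, smooth on `W`,
and `w (σ (t, z)) = t` on `W`. The space `K` is the kernel of `Dw(x₀)`, of smaller dimension. -/
theorem exists_chart {E : Type} [NormedAddCommGroup E] [NormedSpace ℝ E]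
    [FiniteDimensional ℝ E] {U : Set E} (hU : IsOpen U) {w : E → ℝ} (hw : ContDiffOn ℝ ∞ w U)
    {x₀ : E} (hx₀ : x₀ ∈ U) (hd : fderiv ℝ w x₀ ≠ 0) :
    ∃ (K : Submodule ℝ E) (V : Set E) (W : Set (ℝ × K)) (π : E → K) (σ : ℝ × K → E),
      finrank ℝ K < finrank ℝ E ∧ IsOpen W ∧ V ∈ 𝓝 x₀ ∧ ContDiffOn ℝ ∞ σ W ∧
      (∀ q ∈ W, σ q ∈ U ∧ w (σ q) = q.1) ∧ ∀ x ∈ V, (w x, π x) ∈ W ∧ σ (w x, π x) = x := by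
  set L := fderiv ℝ w x₀ with hL
  obtain ⟨v, hv⟩ : ∃ v, L v ≠ 0 := by
    by_contra! h
    exact hd (ContinuousLinearMap.ext h)
  let R : ℝ →L[ℝ] E := ContinuousLinearMap.toSpanSingleton ℝ ((L v)⁻¹ • v)
  have hR : Function.RightInverse R L := by
    intro t
    simp [R, hv]
  let e := ContinuousLinearEquiv.equivOfRightInverse L R hR
  let P : E →L[ℝ] L.ker := (ContinuousLinearMap.snd ℝ ℝ L.ker).comp (e : E →L[ℝ] ℝ × L.ker)
  let Ψ : E → ℝ × L.ker := fun x => (w x, P x)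
  have hΨ : ContDiffOn ℝ ∞ Ψ U := hw.prodMk P.contDiff.contDiffOn
  have hΨ0 : HasFDerivAt Ψ (e : E →L[ℝ] ℝ × L.ker) x₀ := by
    have h1 : HasFDerivAt w L x₀ :=
      ((hw.contDiffAt (hU.mem_nhds hx₀)).differentiableAt (by simp)).hasFDerivAt
    refine (h1.prodMk P.hasFDerivAt).congr_fderiv ?_
    ext x
    · simp [e]
    · simp [P]
  have hcd : ContDiffAt ℝ ∞ Ψ x₀ := hΨ.contDiffAt (hU.mem_nhds hx₀)
  let Φ := hcd.toOpenPartialHomeomorph Ψ hΨ0 (by simp)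
  have hΦ : ∀ x, Φ x = Ψ x := fun x => rfl
  have hx₀s : x₀ ∈ Φ.source := hcd.mem_toOpenPartialHomeomorph_source hΨ0 (by simp)
  -- Smoothness at order `∞` at a single point does not spread to a neighbourhood, so the inverse is
  -- shown to be smooth at each point of the open set `O` where `DΨ` is invertible.
  let I : Set (E →L[ℝ] ℝ × L.ker) := Set.range ((↑) : (E ≃L[ℝ] ℝ × L.ker) → _)
  let O : Set E := U ∩ fderiv ℝ Ψ ⁻¹' I
  have hO : IsOpen O := (hΨ.continuousOn_fderiv_of_isOpen hU (by simp)).isOpen_inter_preimage hU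
    ContinuousLinearEquiv.isOpen
  have hx₀O : x₀ ∈ O := ⟨hx₀, e, hΨ0.fderiv.symm⟩
  refine ⟨L.ker, Φ.source ∩ O, Φ.target ∩ Φ.symm ⁻¹' O, P, Φ.symm, ?_, ?_, ?_, ?_, ?_, ?_⟩
  · apply Submodule.finrank_lt
    intro h
    exact hv (by simpa using (h ▸ Submodule.mem_top : v ∈ L.ker))
  · exact Φ.symm.isOpen_inter_preimage hO
  · exact (Φ.open_source.inter hO).mem_nhds ⟨hx₀s, hx₀O⟩
  · rintro q ⟨hq, hqU, e', he'⟩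
    have hcq := hΨ.contDiffAt (hU.mem_nhds hqU)
    refine (Φ.contDiffAt_symm (f₀' := e') hq ?_ hcq).contDiffWithinAt
    rw [he']
    exact (hcq.differentiableAt (by simp)).hasFDerivAt
  · rintro q ⟨hq, hqO⟩
    exact ⟨hqO.1, congrArg Prod.fst (Φ.right_inv hq)⟩
  · rintro x ⟨hx, hxO⟩
    have h1 : Φ.symm (w x, P x) = x := Φ.left_inv hx
    exact ⟨⟨Φ.map_source hx, by rw [Set.mem_preimage, h1]; exact hxO⟩, h1⟩

/-! ### The induction -/

/-- Sard's theorem for all smooth maps on open subsets of spaces of dimension less than `d`. -/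
def SardBelow (d : ℕ) : Prop :=
  ∀ (E : Type) [NormedAddCommGroup E] [NormedSpace ℝ E] [FiniteDimensional ℝ E],
    finrank ℝ E < d → ∀ (n : ℕ) (f : E → Fin n → ℝ) (U : Set E), IsOpen U →
      ContDiffOn ℝ ∞ f U → volume (f '' {x ∈ U | ¬ Function.Surjective (fderiv ℝ f x)}) = 0

/-- For an auxiliary smooth `g`, the zeros of `g` at which `Df = 0` and `g` is not flat have null
image under `f`. It is used with `g = Df`; the induction on `k` passes from `g` to `Dg`, and the
points with `Dg ≠ 0` lie locally on a smooth hypersurface `ℓ ∘ g = 0`. -/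
theorem volume_image_not_flat_eq_zero {E : Type} [NormedAddCommGroup E] [NormedSpace ℝ E]
    [FiniteDimensional ℝ E] (IH : SardBelow (finrank ℝ E)) {n : ℕ} (hn : 0 < n)
    {f : E → Fin n → ℝ} {U : Set E} (hU : IsOpen U) (hf : ContDiffOn ℝ ∞ f U) (k : ℕ) :
    ∀ (G : Type) [NormedAddCommGroup G] [NormedSpace ℝ G] (g : E → G), ContDiffOn ℝ ∞ g U →
      volume (f '' {x ∈ U | fderiv ℝ f x = 0 ∧ g x = 0 ∧ ¬ FlatAt k G g x}) = 0 := by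
  induction k with
  | zero =>
    intro G _ _ g _
    simp [FlatAt]
  | succ k ih =>
    intro G _ _ g hg
    have hsub : {x ∈ U | fderiv ℝ f x = 0 ∧ g x = 0 ∧ ¬ FlatAt (k + 1) G g x} ⊆
        {x ∈ U | fderiv ℝ f x = 0 ∧ g x = 0 ∧ fderiv ℝ g x ≠ 0} ∪
        {x ∈ U | fderiv ℝ f x = 0 ∧ fderiv ℝ g x = 0 ∧
          ¬ FlatAt k (E →L[ℝ] G) (fderiv ℝ g) x} := by
      rintro x ⟨hxU, h1, h2, h3⟩
      by_cases h4 : fderiv ℝ g x = 0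
      · exact Or.inr ⟨hxU, h1, h4, fun h5 => h3 ⟨h4, h5⟩⟩
      · exact Or.inl ⟨hxU, h1, h2, h4⟩
    refine measure_mono_null (Set.image_mono hsub) ?_
    rw [Set.image_union]
    refine measure_union_null ?_ (ih _ _ (hg.fderiv_of_isOpen hU (by simp)))
    refine volume_image_eq_zero_of_locally fun x₀ hx₀ => ?_
    obtain ⟨hx₀U, -, -, hd⟩ := hx₀
    obtain ⟨v, hv⟩ : ∃ v, fderiv ℝ g x₀ v ≠ 0 := by
      by_contra! h
      exact hd (ContinuousLinearMap.ext h)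
    obtain ⟨ℓ, hℓ⟩ := SeparatingDual.exists_ne_zero (R := ℝ) hv
    have hgd : DifferentiableAt ℝ g x₀ :=
      (hg.contDiffAt (hU.mem_nhds hx₀U)).differentiableAt (by simp)
    have hw : ContDiffOn ℝ ∞ (fun x => ℓ (g x)) U := ℓ.contDiff.comp_contDiffOn hg
    have hwd : fderiv ℝ (fun x => ℓ (g x)) x₀ ≠ 0 := by
      intro h0
      have h1 := (ℓ.hasFDerivAt.comp x₀ hgd.hasFDerivAt).fderiv
      apply hℓ
      change ℓ.comp (fderiv ℝ g x₀) v = 0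
      rw [← h1]
      exact DFunLike.congr_fun h0 v
    obtain ⟨K, V, W, π, σ, hK, hW, hV, hσ, hσW, hπ⟩ := exists_chart hU hw hx₀U hwd
    refine ⟨V, hV, ?_⟩
    have hι : ContDiff ℝ ∞ fun z : K => ((0 : ℝ), z) := by fun_prop
    have hW0 : IsOpen ((fun z : K => ((0 : ℝ), z)) ⁻¹' W) := hW.preimage hι.continuous
    have hσ0 : ContDiffOn ℝ ∞ (fun z : K => σ (0, z)) ((fun z : K => ((0 : ℝ), z)) ⁻¹' W) :=
      hσ.comp hι.contDiffOn fun z hz => hz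
    have hsard := IH K hK n (fun z => f (σ (0, z))) _ hW0
      (hf.comp hσ0 fun z hz => (hσW _ hz).1)
    refine measure_mono_null ?_ hsard
    rintro _ ⟨x, ⟨⟨hxU, hfx, hgx, -⟩, hxV⟩, rfl⟩
    obtain ⟨h1, h2⟩ := hπ x hxV
    simp only [hgx, map_zero] at h1 h2
    refine ⟨π x, ⟨h1, ?_⟩, by simp only [h2]⟩
    have hd1 : HasFDerivAt f (fderiv ℝ f x) (σ (0, π x)) := by
      rw [h2]
      exact ((hf.contDiffAt (hU.mem_nhds hxU)).differentiableAt (by simp)).hasFDerivAt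
    have hd2 := ((hσ0.contDiffAt (hW0.mem_nhds h1)).differentiableAt (by simp)).hasFDerivAt
    have hd3 : fderiv ℝ (fun z => f (σ (0, z))) (π x) = 0 := by
      have := (hd1.comp (π x) hd2).fderiv
      rw [hfx, ContinuousLinearMap.zero_comp] at this
      exact this
    rw [hd3]
    intro hs
    obtain ⟨z, hz⟩ := hs (fun _ => 1)
    simpa using congrFun hz ⟨0, hn⟩

/-- Critical points of nonzero rank: slicing along a component of `f` that is a submersion. -/
theorem volume_image_rank_pos_eq_zero {E : Type} [NormedAddCommGroup E] [NormedSpace ℝ E]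
    [FiniteDimensional ℝ E] (IH : SardBelow (finrank ℝ E)) {m : ℕ}
    {f : E → Fin (m + 1) → ℝ} {U : Set E} (hU : IsOpen U) (hf : ContDiffOn ℝ ∞ f U) :
    volume (f '' {x ∈ U | ¬ Function.Surjective (fderiv ℝ f x) ∧ fderiv ℝ f x ≠ 0}) = 0 := by
  have hfd : ∀ x ∈ U, HasFDerivAt f (fderiv ℝ f x) x := fun x hx =>
    ((hf.contDiffAt (hU.mem_nhds hx)).differentiableAt (by simp)).hasFDerivAt
  refine volume_image_eq_zero_of_locally fun x₀ hx₀ => ?_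
  obtain ⟨hx₀U, -, hd⟩ := hx₀
  obtain ⟨v, hv⟩ : ∃ v, fderiv ℝ f x₀ v ≠ 0 := by
    by_contra! h
    exact hd (ContinuousLinearMap.ext h)
  obtain ⟨i, hi⟩ := Function.ne_iff.1 hv
  have hw : ContDiffOn ℝ ∞ (fun x => f x i) U := contDiffOn_pi.1 hf i
  have hwd : fderiv ℝ (fun x => f x i) x₀ ≠ 0 := by
    intro h0
    have h1 := (hasFDerivAt_pi'.1 (hfd x₀ hx₀U) i).fderiv
    rw [h0] at h1
    exact hi (DFunLike.congr_fun h1 v).symm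
  obtain ⟨K, V, W, π, σ, hK, hW, hV, hσ, hσW, hπ⟩ := exists_chart hU hw hx₀U hwd
  obtain ⟨Q, hQ, hQVU, hQc⟩ := local_compact_nhds (inter_mem hV (hU.mem_nhds hx₀U))
  refine ⟨Q, hQ, ?_⟩
  -- On a compact neighbourhood the critical set is compact; this gives the measurability that
  -- Fubini's theorem requires.
  set T : Set E := {x ∈ Q | ¬ Function.Surjective (fderiv ℝ f x)} with hT
  have hTc : IsCompact T := by
    have hcl : IsClosed {A : E →L[ℝ] Fin (m + 1) → ℝ | ¬ Function.Surjective A} := by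
      rw [← isOpen_compl_iff, isOpen_iff_mem_nhds]
      intro A hA
      filter_upwards [eventually_surjective (not_not.1 hA)] with B hB
      exact not_not.2 hB
    have hc : ContinuousOn (fderiv ℝ f) Q :=
      (hf.continuousOn_fderiv_of_isOpen hU (by simp)).mono fun x hx => (hQVU hx).2
    exact hQc.of_isClosed_subset (hc.preimage_isClosed_of_isClosed hQc.isClosed hcl)
      Set.inter_subset_left
  have hmeas : MeasurableSet (f '' T) :=
    (hTc.image_of_continuousOn (hf.continuousOn.mono fun x hx => (hQVU hx.1).2)).measurableSet
  refine measure_mono_null (t := f '' T) (Set.image_mono fun x hx => ⟨hx.2, hx.1.2.1⟩) ?_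
  have hmp := (volume_preserving_piFinSuccAbove (fun _ : Fin (m + 1) => ℝ) i).symm
  rw [← hmp.measure_preimage_equiv]
  refine (Measure.measure_prod_null (hmp.measurable hmeas)).2 (Eventually.of_forall fun t => ?_)
  have hι : ContDiff ℝ ∞ fun z : K => (t, z) := by fun_prop
  have hWt : IsOpen ((fun z : K => (t, z)) ⁻¹' W) := hW.preimage hι.continuous
  have hfσ : ContDiffOn ℝ ∞ (fun q => f (σ q)) W := hf.comp hσ fun q hq => (hσW q hq).1
  -- `ρ` drops the coordinate `i`.
  let ρ : (Fin (m + 1) → ℝ) →L[ℝ] (Fin m → ℝ) :=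
    ContinuousLinearMap.pi fun j => ContinuousLinearMap.proj (i.succAbove j)
  have hsard := IH K hK m (fun z => ρ (f (σ (t, z)))) _ hWt
    (ρ.contDiff.comp_contDiffOn (hfσ.comp hι.contDiffOn fun z hz => hz))
  refine measure_mono_null ?_ hsard
  rintro z ⟨x, ⟨hxQ, hxs⟩, hxz⟩
  have hxz' : f x = i.insertNth (α := fun _ => ℝ) t z := hxz
  have hxt : f x i = t := by
    rw [hxz']
    simp
  have hxρ : ρ (f x) = z := by
    rw [hxz']
    ext j
    simp [ρ]
  obtain ⟨h1, h2⟩ := hπ x (hQVU hxQ).1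
  simp only [hxt] at h1 h2
  refine ⟨π x, ⟨h1, fun hsurj => hxs ?_⟩, by simp only [h2, hxρ]⟩
  have hσd := ((hσ.contDiffAt (hW.mem_nhds h1)).differentiableAt (by simp)).hasFDerivAt
  have hfx : HasFDerivAt f (fderiv ℝ f x) (σ (t, π x)) := by
    rw [h2]
    exact hfd x (hQVU hxQ).2
  set H := (fderiv ℝ f x).comp (fderiv ℝ σ (t, π x)) with hH
  have hHd : HasFDerivAt (fun q => f (σ q)) H (t, π x) := hfx.comp (t, π x) hσd
  have hHi : ∀ q : ℝ × K, H q i = q.1 := by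
    have h3 := hasFDerivAt_pi'.1 hHd i
    have h4 : HasFDerivAt (fun q => f (σ q) i) (ContinuousLinearMap.fst ℝ ℝ K) (t, π x) := by
      refine (hasFDerivAt_fst).congr_of_eventuallyEq ?_
      filter_upwards [hW.mem_nhds h1] with q hq
      exact (hσW q hq).2
    exact fun q => DFunLike.congr_fun (h3.unique h4) q
  have hgd : fderiv ℝ (fun z => ρ (f (σ (t, z)))) (π x) =
      ρ.comp (H.comp (ContinuousLinearMap.inr ℝ ℝ K)) :=
    (ρ.hasFDerivAt.comp (π x) (hHd.comp (π x) (hasFDerivAt_prodMk_right t (π x)))).fderiv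
  rw [hgd] at hsurj
  -- `H` is block triangular: `H (s, k)` has `i`-th coordinate `s`, and `k ↦ ρ (H (0, k))` is onto.
  intro u
  obtain ⟨k, hk⟩ := hsurj (ρ (u - H (u i, 0)))
  refine ⟨fderiv ℝ σ (t, π x) (u i, k), ?_⟩
  change H (u i, k) = u
  have hsplit : H (u i, k) = H (u i, 0) + H (0, k) := by
    rw [← map_add]
    simp
  ext j
  rcases Fin.eq_self_or_eq_succAbove i j with rfl | ⟨j, rfl⟩
  · exact hHi _
  · have := congrFun hk j
    simp only [ρ, ContinuousLinearMap.comp_apply, ContinuousLinearMap.inr_apply,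
      ContinuousLinearMap.pi_apply, ContinuousLinearMap.proj_apply, Pi.sub_apply] at this
    rw [hsplit, Pi.add_apply, this]
    ring

theorem sardBelow (d : ℕ) : SardBelow d := by
  induction d with
  | zero => exact fun E _ _ _ h => absurd h (Nat.not_lt_zero _)
  | succ d ih =>
    intro E _ _ _ hE n f U hU hf
    have IH : SardBelow (finrank ℝ E) := fun E' _ _ _ hE' =>
      ih E' (hE'.trans_le (Nat.lt_succ_iff.1 hE))
    rcases n with _ | m
    · have : {x ∈ U | ¬ Function.Surjective (fderiv ℝ f x)} = ∅ :=
        Set.eq_empty_of_forall_notMem fun x hx =>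
          hx.2 (Function.surjective_to_subsingleton _)
      simp [this]
    · set p := finrank ℝ E with hp
      have hsub : {x ∈ U | ¬ Function.Surjective (fderiv ℝ f x)} ⊆
          ({x ∈ U | ¬ Function.Surjective (fderiv ℝ f x) ∧ fderiv ℝ f x ≠ 0} ∪
          {x ∈ U | fderiv ℝ f x = 0 ∧ fderiv ℝ f x = 0 ∧ ¬ FlatAt p _ (fderiv ℝ f) x}) ∪
          {x ∈ U | FlatAt (p + 1) _ f x} := by
        rintro x ⟨hxU, hx⟩
        by_cases h1 : fderiv ℝ f x = 0
        · by_cases h2 : FlatAt p _ (fderiv ℝ f) x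
          · exact Or.inr ⟨hxU, h1, h2⟩
          · exact Or.inl (Or.inr ⟨hxU, h1, h1, h2⟩)
        · exact Or.inl (Or.inl ⟨hxU, hx, h1⟩)
      refine measure_mono_null (Set.image_mono hsub) ?_
      rw [Set.image_union, Set.image_union]
      refine measure_union_null (measure_union_null (volume_image_rank_pos_eq_zero IH hU hf) ?_)
        (volume_image_flat_eq_zero m.succ_pos hU hf (Nat.le_succ p))
      exact volume_image_not_flat_eq_zero IH m.succ_pos hU hf p _ _
        (hf.fderiv_of_isOpen hU (by simp))

theorem measure_range_zero_of_nowhere_submersion {p n : ℕ}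
    (φ : (Fin p → ℝ) → (Fin n → ℝ))
    (hφ : ContDiff ℝ (⊤ : ℕ∞) φ)
    (h : ∀ x, ¬ Function.Surjective (fderiv ℝ φ x)) :
    volume (Set.range φ) = 0 := by
  have := sardBelow (p + 1) (Fin p → ℝ) (by simp) n φ Set.univ isOpen_univ hφ.contDiffOn
  simpa [h] using this
end
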